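/- Let H be a real inner product space and P : H →ₗ[ℝ] H a symmetric linear operator. Then for all x, y ∈ H and all j, l ∈ ℕ, ⟪T_j(P) x, P (T_l(P) y)⟫ = (1/4) · (⟪x, T_{j+l+1}(P) y⟫ + ⟪x, T_{|j−l−1|}(P) y⟫ + ⟪x, T_{|j+l−1|}(P) y⟫ + ⟪x, T_{|j−l+1|}(P) y⟫). (This is the data-driven stiffness matrix formula: the (j,l) block of the stiffness matrix equals (1/4)(D_{j+l+1} + D_{|j−l−1|} + D_{|j+l−1|} + D_{|j−l+1|}).) -/

import Mathlib

open Polynomial Polynomial.Chebyshev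
open scoped RealInnerProductSpace

theorem T_abs_aux (n : ℤ) : T ℝ |n| = T ℝ n := by
  rcases abs_choice n with h | h <;> rw [h]
  exact T_neg ℝ n

theorem aeval_symm_aux {H : Type*} [NormedAddCommGroup H] [InnerProductSpace ℝ H]
    (P : Module.End ℝ H) (hsym : ∀ x y : H, ⟪P x, y⟫ = ⟪x, P y⟫) (p : ℝ[X]) :
    ∀ x y : H, ⟪aeval P p x, y⟫ = ⟪x, aeval P p y⟫ := by
  induction p using Polynomial.induction_on' with
  | add p q hp hq =>
    intro x y
    simp only [map_add, LinearMap.add_apply, inner_add_left, inner_add_right, hp, hq]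
  | monomial n a =>
    have hpow : ∀ (n : ℕ) (x y : H), ⟪(P ^ n) x, y⟫ = ⟪x, (P ^ n) y⟫ := by
      intro n
      induction n with
      | zero => intro x y; simp
      | succ n ih =>
        intro x y
        rw [pow_succ, Module.End.mul_apply, ih, hsym, ← Module.End.mul_apply, ← pow_succ',
          pow_succ]
    intro x y
    simp only [aeval_monomial, Module.End.mul_apply, Module.algebraMap_end_apply,
      real_inner_smul_left, real_inner_smul_right, hpow]

theorem cheb_prod_aux (j l : ℤ) : T ℝ j * (X * T ℝ l) = (1 / 4 : ℝ) •
    (T ℝ (j + l + 1) + T ℝ (j - l - 1) + T ℝ (j + l - 1) + T ℝ (j - l + 1)) := by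
  have h1 := T_mul_T ℝ j (l + 1)
  have h2 := T_mul_T ℝ j (l - 1)
  have h3 := T_add_one ℝ l
  rw [show j + (l + 1) = j + l + 1 by ring, show j - (l + 1) = j - l - 1 by ring] at h1
  rw [show j + (l - 1) = j + l - 1 by ring, show j - (l - 1) = j - l + 1 by ring] at h2
  have h : T ℝ (j + l + 1) + T ℝ (j - l - 1) + T ℝ (j + l - 1) + T ℝ (j - l + 1)
      = (4 : ℝ) • (T ℝ j * (X * T ℝ l)) := by
    rw [smul_eq_C_mul, show (Polynomial.C (4 : ℝ)) = 4 from rfl]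
    linear_combination -h1 - h2 + 2 * T ℝ j * h3
  rw [h, smul_smul]
  norm_num

/-- The data-driven stiffness matrix formula: for a symmetric operator `P` on a real inner
product space, `⟪T_j(P) x, P (T_l(P) y)⟫ = (1/4)(⟪x, T_{j+l+1}(P) y⟫ + ⟪x, T_{|j-l-1|}(P) y⟫
+ ⟪x, T_{|j+l-1|}(P) y⟫ + ⟪x, T_{|j-l+1|}(P) y⟫)`. -/
theorem stiffness_matrix_formula {H : Type*} [NormedAddCommGroup H] [InnerProductSpace ℝ H]
    (P : H →ₗ[ℝ] H) (hsym : ∀ x y : H, ⟪P x, y⟫ = ⟪x, P y⟫)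
    (x y : H) (j l : ℕ) :
    ⟪aeval (P : Module.End ℝ H) (T ℝ (j : ℤ)) x,
      P (aeval (P : Module.End ℝ H) (T ℝ (l : ℤ)) y)⟫ =
    (1 / 4 : ℝ) *
      (⟪x, aeval (P : Module.End ℝ H) (T ℝ ((j : ℤ) + l + 1)) y⟫ +
       ⟪x, aeval (P : Module.End ℝ H) (T ℝ (|(j : ℤ) - l - 1|)) y⟫ +
       ⟪x, aeval (P : Module.End ℝ H) (T ℝ (|(j : ℤ) + l - 1|)) y⟫ +
       ⟪x, aeval (P : Module.End ℝ H) (T ℝ (|(j : ℤ) - l + 1|)) y⟫) := by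
  have key := congrArg (fun p => ⟪x, aeval (P : Module.End ℝ H) p y⟫) (cheb_prod_aux j l)
  simp only [map_mul, aeval_X, Module.End.mul_apply, map_smul, map_add, LinearMap.smul_apply,
    LinearMap.add_apply, inner_add_right, real_inner_smul_right] at key
  rw [aeval_symm_aux P hsym, T_abs_aux, T_abs_aux, T_abs_aux]
  exact key
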